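/- (Theorem 1.) Consider N users; user n has a nonempty finite index set Pₙ of ground-truth critical events, each event k ∈ Pₙ having a confidence-score sequence Cₙ k : Fin L → ℝ, with utility Uₙ(αl, αu) = |{k ∈ Pₙ : k is predicted critical under (αl, αu)}| / |Pₙ|, and a weight ρₙ > 0. Let threshold vectors satisfy αlₙ ≤ αl'ₙ and αuₙ ≤ αu'ₙ for every n, and suppose Uₙ(αl'ₙ, αu'ₙ) > 0 for every n. Then the weighted log-utility objective is monotonically decreasing in the thresholds: ∑ₙ ρₙ · ln(Uₙ(αl'ₙ, αu'ₙ)) ≤ ∑ₙ ρₙ · ln(Uₙ(αlₙ, αuₙ)). -/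

import Mathlib

open Classical

/-- An event with confidence scores `C` is predicted critical under thresholds `(αl, αu)`
if some layer `q` has `C q ≥ αu` while all earlier layers have scores strictly between
the thresholds. -/
def PredCritical {L : ℕ} (C : Fin L → ℝ) (αl αu : ℝ) : Prop :=
  ∃ q : Fin L, αu ≤ C q ∧ ∀ t : Fin L, t < q → αl < C t ∧ C t < αu

/-- The utility (true positive rate) of a finite family of ground-truth critical events. -/
noncomputable def Utility {L : ℕ} {ι : Type*} (P : Finset ι) (C : ι → Fin L → ℝ)
    (αl αu : ℝ) : ℝ :=
  ((P.filter (fun k => PredCritical (C k) αl αu)).card : ℝ) / (P.card : ℝ)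

theorem PredCritical.anti {L : ℕ} {C : Fin L → ℝ} {a a' b b' : ℝ} (ha : a ≤ a') (hb : b ≤ b')
    (h : PredCritical C a' b') : PredCritical C a b := by
  obtain ⟨q, hq, hlt⟩ := h
  by_cases hex : ∃ t, t < q ∧ b ≤ C t
  · obtain ⟨m, ⟨hmq, hmb⟩, hmin⟩ :=
      WellFounded.has_min (wellFounded_lt (α := Fin L)) {t | t < q ∧ b ≤ C t} hex
    refine ⟨m, hmb, fun t ht => ⟨ha.trans_lt (hlt t (ht.trans hmq)).1, ?_⟩⟩
    by_contra hc
    exact hmin t ⟨ht.trans hmq, not_lt.mp hc⟩ ht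
  · push Not at hex
    exact ⟨q, hb.trans hq, fun t ht => ⟨ha.trans_lt (hlt t ht).1, hex t ht⟩⟩

/-- Theorem 1: the weighted log-utility objective is monotonically decreasing with
respect to the dual thresholds. -/
theorem weighted_log_utility_decreasing {L N : ℕ} {ι : Type*}
    (P : Fin N → Finset ι) (hP : ∀ n, (P n).Nonempty)
    (C : Fin N → ι → Fin L → ℝ)
    (ρ : Fin N → ℝ) (hρ : ∀ n, 0 < ρ n)
    (αl αl' αu αu' : Fin N → ℝ)
    (hl : ∀ n, αl n ≤ αl' n) (hu : ∀ n, αu n ≤ αu' n)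
    (hpos : ∀ n, 0 < Utility (P n) (C n) (αl' n) (αu' n)) :
    ∑ n, ρ n * Real.log (Utility (P n) (C n) (αl' n) (αu' n)) ≤
      ∑ n, ρ n * Real.log (Utility (P n) (C n) (αl n) (αu n)) := by
  refine Finset.sum_le_sum fun n _ => mul_le_mul_of_nonneg_left ?_ (hρ n).le
  refine Real.log_le_log (hpos n) ?_
  unfold Utility
  refine div_le_div_of_nonneg_right ?_ (Nat.cast_nonneg _)
  refine Nat.cast_le.mpr (Finset.card_le_card fun k hk => ?_)
  rw [Finset.mem_filter] at hk ⊢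
  exact ⟨hk.1, hk.2.anti (hl n) (hu n)⟩
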